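/- Let k ≥ 1 and 0 ≤ j ≤ q_{k−1} − 1, set n = q_k + j with n ≥ 2, and let D = β_k q_{k+1} + (1 − β_k) q_k. Then every factor w of v₀ of length n has a well-defined frequency lim_{N→∞} (1/N)·#{1 ≤ m ≤ N : (v₀(m), …, v₀(m+n−1)) = w}, which equals (β_k(a_{k+1}+1) + (1−β_k))/D for the q_{k−1} − 1 − j factors occurring in the prefix (v₀(1), …, v₀(q_k + q_{k−1} − 2)), equals (β_k a_{k+1} + (1−β_k))/D for exactly q_k − q_{k−1} + 1 + j factors, and equals β_k/D for exactly j + 1 factors. -/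

import Mathlib

open scoped Classical

noncomputable section

/-- The Gauss map. -/
def gaussMap (x : ℝ) : ℝ := Int.fract x⁻¹

/-- `pq α k` is the partial quotient `a_{k+1}` of the continued fraction of `α`. -/
def pq (α : ℝ) (k : ℕ) : ℕ := ⌊(gaussMap^[k] α)⁻¹⌋₊

/-- `qd α (n+1)` is the convergent denominator `q_n`; `qd α 0 = q_{-1} = 0`, `qd α 1 = q₀ = 1`. -/
def qd (α : ℝ) : ℕ → ℕ
  | 0 => 0
  | 1 => 1
  | (n+2) => pq α n * qd α (n+1) + qd α n

/-- The circle map sequence of rotation number `α` (value `true` means letter `1`). -/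
def v0 (α : ℝ) (n : ℤ) : Bool := decide (1 - α ≤ Int.fract ((n : ℝ) * α))

/-- The word `(v₀(m+1), …, v₀(m+n))`. -/
def word (α : ℝ) (m n : ℕ) : List Bool :=
  (List.range n).map (fun i => v0 α ((m : ℤ) + 1 + i))

/-- `w` is a factor (admissible word) of `v₀`. -/
def IsFactor (α : ℝ) (w : List Bool) : Prop := ∃ m : ℕ, w = word α m w.length

/-- `w` occurs as a subword of the prefix `(v₀(1), …, v₀(N))`. -/
def OccursIn (α : ℝ) (w : List Bool) (N : ℕ) : Prop :=
  ∃ m : ℕ, m + w.length ≤ N ∧ w = word α m w.length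

/-- `exhaust α n` is `f(n)`: the least `N` such that every factor of length `n`
occurs in `(v₀(1), …, v₀(N))`. -/
def exhaust (α : ℝ) (n : ℕ) : ℕ :=
  sInf {N | ∀ w : List Bool, w.length = n → IsFactor α w → OccursIn α w N}

/-- number of occurrences of `w` in the prefix `(v₀(1), …, v₀(N))`. -/
def occCount (α : ℝ) (w : List Bool) (N : ℕ) : ℕ :=
  ((Finset.range N).filter (fun m => m + w.length ≤ N ∧ word α m w.length = w)).card

/-- the word `(v(m), v(m+1), …, v(m+n-1))` of a two-sided sequence. -/
def wordAt (v : ℤ → Bool) (m : ℤ) (n : ℕ) : List Bool :=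
  (List.range n).map (fun i => v (m + i))

/-- the hull `Ω`: closure of the set of translates of `v₀`. -/
def hull (α : ℝ) : Set (ℤ → Bool) :=
  closure {u | ∃ m : ℤ, u = fun n => v0 α (n - m)}


/-- `v₀` has frequency `L` of the word `w`: the proportion of positions `1 ≤ m ≤ N` with
`(v₀(m), …, v₀(m + |w| - 1)) = w` tends to `L`. -/
def HasFreq0 (α : ℝ) (w : List Bool) (L : ℝ) : Prop :=
  Filter.Tendsto
    (fun N : ℕ =>
      (((Finset.Icc 1 N).filter
          (fun m : ℕ => wordAt (v0 α) (m : ℤ) w.length = w)).card : ℝ) / N)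
    Filter.atTop (nhds L)

/-!
The word of length `n` read at position `m` is determined by the arc containing `mα` when the circle
is cut at the points `-cα`, `0 ≤ c ≤ n`. By the three distance theorem, if `q_k ≤ n < q_k + q_{k-1}`
these arcs have the lengths `|q_{k-1}α - p_{k-1}|`, `|q_kα - p_k|` and their sum. Each length is the
fractional part of an integer multiple `dα`, so the arc is a bounded remainder set (Kesten): its
indicator exceeds its length by a coboundary of the rotation. Hence visits to the arc have as
frequency its length.
-/

/-! ### Fractional parts -/

section Fract

variable {R : Type*} [CommRing R] [LinearOrder R] [IsStrictOrderedRing R] [FloorRing R]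

lemma floor_add_eq_add_floor_iff (x y : R) :
    ⌊x + y⌋ = ⌊x⌋ + ⌊y⌋ ↔ Int.fract x ≤ Int.fract (x + y) := by
  have hy := Int.fract_lt_one y
  have hxy := Int.le_floor_add x y
  have hxy' := Int.le_floor_add_floor x y
  have carry : Int.fract (x + y) = Int.fract x + Int.fract y + (⌊x⌋ + ⌊y⌋ - ⌊x + y⌋ : ℤ) := by
    simp only [Int.fract]
    push_cast
    abel
  constructor
  · intro h
    rw [carry, h, sub_self, Int.cast_zero, add_zero]
    exact le_add_of_nonneg_right (Int.fract_nonneg y)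
  · intro h
    by_contra hne
    rw [carry, show ⌊x⌋ + ⌊y⌋ - ⌊x + y⌋ = -1 by omega] at h
    push_cast at h
    linarith

lemma fract_sub_eq_ite (x y : R) : Int.fract (x - y) =
    Int.fract x - Int.fract y + if Int.fract x < Int.fract y then 1 else 0 := by
  have := Int.fract_nonneg x
  have := Int.fract_lt_one x
  have := Int.fract_nonneg y
  have := Int.fract_lt_one y
  rw [Int.fract_eq_iff]
  split_ifs with h
  · refine ⟨by linarith, by linarith, ⌊x⌋ - ⌊y⌋ - 1, ?_⟩
    simp only [Int.fract]
    push_cast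
    abel
  · refine ⟨by linarith, by linarith, ⌊x⌋ - ⌊y⌋, ?_⟩
    simp only [Int.fract]
    push_cast
    abel

lemma fract_le_fract_sub_iff (x : R) {y : R} (hy : 0 < Int.fract y) :
    Int.fract x ≤ Int.fract (x - y) ↔ Int.fract x < Int.fract y := by
  have := Int.fract_lt_one y
  rw [fract_sub_eq_ite]
  split_ifs with h
  · exact iff_of_true (by linarith) h
  · exact iff_of_false (by linarith) h

end Fract

/-! ### Words and arcs -/

section Words

variable {α : ℝ}

lemma length_wordAt (v : ℤ → Bool) (m : ℤ) (n : ℕ) : (wordAt v m n).length = n := by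
  simp [wordAt]

lemma wordAt_eq_map (v : ℤ → Bool) (m : ℤ) (n : ℕ) :
    wordAt v m n = (List.range n).map fun i : ℕ => v (m + i) := by
  simp [wordAt, ← List.map_eq_flatMap]

lemma word_eq_wordAt (α : ℝ) (m n : ℕ) : word α m n = wordAt (v0 α) (m + 1) n := rfl

lemma wordAt_eq_wordAt_iff {v : ℤ → Bool} {m m' : ℤ} {n : ℕ} :
    wordAt v m n = wordAt v m' n ↔ ∀ i < n, v (m + i) = v (m' + i) := by
  simp only [wordAt_eq_map, List.map_inj_left, List.mem_range]

lemma floor_add_one_mul (hα : α ∈ Set.Ioo 0 1) (m : ℤ) :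
    ⌊(m + 1) * α⌋ = ⌊m * α⌋ + if v0 α m then 1 else 0 := by
  have := hα.1
  have := hα.2
  have := Int.floor_add_fract (m * α)
  have := Int.fract_nonneg (m * α)
  have := Int.fract_lt_one (m * α)
  simp only [v0, decide_eq_true_eq]
  rw [Int.floor_eq_iff]
  split_ifs with h <;> push_cast <;> constructor <;> linarith

lemma wordAt_v0_eq_iff_floor (hα : α ∈ Set.Ioo 0 1) {m m' : ℤ} {n : ℕ} :
    wordAt (v0 α) m n = wordAt (v0 α) m' n ↔
      ∀ i ≤ n, ⌊(m + i) * α⌋ - ⌊m * α⌋ = ⌊(m' + i) * α⌋ - ⌊m' * α⌋ := by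
  have step (x : ℤ) (i : ℕ) : ⌊(x + (i + 1 : ℕ)) * α⌋ =
      ⌊(x + i) * α⌋ + if v0 α (x + i) then 1 else 0 := by
    have := floor_add_one_mul hα (x + i)
    push_cast at this ⊢
    rwa [← add_assoc]
  rw [wordAt_eq_wordAt_iff]
  constructor
  · intro h i hi
    induction i with
    | zero => simp
    | succ i ih =>
      have := ih (by omega)
      rw [step, step, h i hi]
      omega
  · intro h i hi
    have now := h i hi.le
    have next := h (i + 1) hi
    rw [step, step] at next
    cases hv : v0 α (m + i) <;> cases hv' : v0 α (m' + i) <;> grind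

/-- For `c ≤ n`, the word of length `n` of the points in the arc whose left endpoint is `-cα`, when
the circle is cut at `0, -α, …, -nα`. The point `-cα` lies in its own arc, so it is the word at
position `-c`. -/
def arcWord (α : ℝ) (n c : ℕ) : List Bool := wordAt (v0 α) (-c) n

lemma length_arcWord (α : ℝ) (n c : ℕ) : (arcWord α n c).length = n := length_wordAt _ _ _

lemma wordAt_eq_arcWord_iff (hα : α ∈ Set.Ioo 0 1) {n c : ℕ} (hc : c ≤ n) (m : ℤ) :
    wordAt (v0 α) m n = arcWord α n c ↔
      ∀ i ≤ n, Int.fract ((m + c) * α) ≤ Int.fract ((m + i) * α) := by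
  have additive (i : ℕ) : ⌊(m + i) * α⌋ = ⌊(m + c) * α⌋ + ⌊((-c : ℤ) + i) * α⌋ ↔
      Int.fract ((m + c) * α) ≤ Int.fract ((m + i) * α) := by
    have := floor_add_eq_add_floor_iff ((m + c) * α) (((-c : ℤ) + i) * α)
    rwa [show (m + c) * α + ((-c : ℤ) + i) * α = (m + i) * α by push_cast; ring] at this
  simp only [arcWord, wordAt_v0_eq_iff_floor hα, ← additive]
  constructor
  · intro h i hi
    have at_i := h i hi
    have at_c := h c hc
    have : ⌊((-c : ℤ) + c) * α⌋ = 0 := by simp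
    omega
  · intro h i hi
    have at_i := h i hi
    have at_zero := h 0 n.zero_le
    simp only [Nat.cast_zero, add_zero] at at_zero
    omega

lemma exists_wordAt_eq_arcWord (hα : α ∈ Set.Ioo 0 1) (m : ℤ) (n : ℕ) :
    ∃ c ≤ n, wordAt (v0 α) m n = arcWord α n c := by
  obtain ⟨c, hc, nearest⟩ := Finset.exists_min_image (Finset.Iic n)
    (fun c : ℕ => Int.fract ((m + c) * α)) ⟨n, Finset.mem_Iic.2 le_rfl⟩
  rw [Finset.mem_Iic] at hc
  exact ⟨c, hc, (wordAt_eq_arcWord_iff hα hc m).2 fun i hi => nearest i (Finset.mem_Iic.2 hi)⟩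

end Words

/-! ### Frequency of visits to a bounded remainder set -/

section Frequency

open Filter Topology

lemma norm_sum_shift_sub_le_natCast {E : Type*} [SeminormedAddCommGroup E] {f : ℤ → E} {C : ℝ}
    (hf : ∀ x y, ‖f x - f y‖ ≤ C) (d N : ℕ) :
    ‖∑ m ∈ Finset.Icc 1 N, (f (m + d) - f m)‖ ≤ d * C := by
  have telescope : ∑ m ∈ Finset.Icc 1 N, (f (m + d) - f m) =
      ∑ i ∈ Finset.range d, (f ((N + 1 : ℕ) + i) - f ((1 : ℕ) + i)) :=
    calc ∑ m ∈ Finset.Icc 1 N, (f (m + d) - f m)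
        = ∑ m ∈ Finset.Icc 1 N, ∑ i ∈ Finset.range d, (f (m + (i + 1 : ℕ)) - f (m + i)) :=
          Finset.sum_congr rfl fun m _ => by
            rw [Finset.sum_range_sub (fun i : ℕ => f (m + i)), Nat.cast_zero, add_zero]
      _ = ∑ i ∈ Finset.range d, ∑ m ∈ Finset.Icc 1 N, (f ((m + 1 : ℕ) + i) - f (m + i)) := by
          rw [Finset.sum_comm]
          simp only [Nat.cast_add, Nat.cast_one, add_assoc, add_comm (1 : ℤ)]
      _ = _ := Finset.sum_congr rfl fun i _ => by
          rw [← Finset.Ico_add_one_right_eq_Icc,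
            Finset.sum_Ico_sub (f := fun m : ℕ => f (m + i)) (show 1 ≤ N + 1 by omega)]
  rw [telescope]
  simpa using norm_sum_le_of_le (Finset.range d) fun i _ => hf ((N + 1 : ℕ) + i) ((1 : ℕ) + i)

lemma norm_sum_shift_sub_le {E : Type*} [SeminormedAddCommGroup E] {f : ℤ → E} {C : ℝ}
    (hf : ∀ x y, ‖f x - f y‖ ≤ C) (d : ℤ) (N : ℕ) :
    ‖∑ m ∈ Finset.Icc 1 N, (f (m + d) - f m)‖ ≤ |d| * C := by
  obtain ⟨e, rfl | rfl⟩ := d.eq_nat_or_neg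
  · simpa using norm_sum_shift_sub_le_natCast hf e N
  · rw [← norm_neg, ← Finset.sum_neg_distrib]
    simpa using
      norm_sum_shift_sub_le_natCast (f := fun x => f (x + -e)) (fun x y => hf _ _) e N

lemma tendsto_div_of_abs_sub_mul_le {u : ℕ → ℝ} {L C : ℝ} (h : ∀ N : ℕ, |u N - N * L| ≤ C) :
    Tendsto (fun N : ℕ => u N / N) atTop (𝓝 L) := by
  rw [tendsto_iff_norm_sub_tendsto_zero]
  refine squeeze_zero' (.of_forall fun _ => norm_nonneg _) ?_
    (tendsto_const_div_atTop_nhds_zero_nat C)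
  filter_upwards [eventually_gt_atTop 0] with N hN
  have hN' : (0 : ℝ) < N := by exact_mod_cast hN
  rw [Real.norm_eq_abs, div_sub' hN'.ne', abs_div, abs_of_pos hN']
  gcongr
  exact h N

lemma tendsto_card_fract_lt_div (α x : ℝ) (d : ℤ) :
    Tendsto (fun N : ℕ => (((Finset.Icc 1 N).filter fun m : ℕ =>
      Int.fract (m * α + x) < Int.fract (d * α)).card : ℝ) / N) atTop
      (𝓝 (Int.fract (d * α))) := by
  set L := Int.fract (d * α)
  set f : ℤ → ℝ := fun m => Int.fract (m * α + x)
  have bounded (y z : ℤ) : ‖f y - f z‖ ≤ 1 := by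
    rw [Real.norm_eq_abs, abs_le]
    have := Int.fract_nonneg (y * α + x)
    have := Int.fract_lt_one (y * α + x)
    have := Int.fract_nonneg (z * α + x)
    have := Int.fract_lt_one (z * α + x)
    constructor <;> linarith
  have coboundary (m : ℕ) : f (m + -d) - f m = (if f m < L then 1 else 0) - L := by
    have := fract_sub_eq_ite (m * α + x) (d * α)
    simp only [f]
    push_cast
    rw [show (m + -d) * α + x = m * α + x - d * α by ring, this]
    ring
  refine tendsto_div_of_abs_sub_mul_le (C := |(-d : ℤ)| * 1) fun N => ?_
  have discrepancy := norm_sum_shift_sub_le bounded (-d) N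
  simp only [coboundary, Finset.sum_sub_distrib, Finset.sum_const, Nat.card_Icc,
    add_tsub_cancel_right, nsmul_eq_mul, Real.norm_eq_abs, Finset.sum_boole] at discrepancy
  exact discrepancy

lemma HasFreq0.exists_wordAt_eq {α : ℝ} {w : List Bool} {L : ℝ} (h : HasFreq0 α w L)
    (hL : L ≠ 0) : ∃ m : ℕ, 1 ≤ m ∧ wordAt (v0 α) m w.length = w := by
  by_contra! hw
  refine hL (tendsto_nhds_unique h (tendsto_const_nhds.congr fun N => ?_))
  rw [Finset.filter_false_of_mem fun m hm => hw m (Finset.mem_Icc.1 hm).1, Finset.card_empty,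
    Nat.cast_zero, zero_div]

end Frequency

/-! ### The three distance theorem -/

/-- Two consecutive convergents of `α`, in either order: `Q / B` approximates `α` from below and
`P / A` from above, `b = Bα - Q` and `a = P - Aα` are the errors. -/
structure ApproxPair (α : ℝ) (A B : ℕ) (P Q : ℤ) (a b : ℝ) : Prop where
  a_pos : 0 < a
  b_pos : 0 < b
  mul_A : A * α = P - a
  mul_B : B * α = Q + b
  det : B * P - A * Q = 1

/-- When the circle is cut at `0, -α, …, -nα`, the length of the arc with left endpoint `-cα`: its
right endpoint is `-(c - B)α`, or else `-(c + A)α`, or else `-(c + A - B)α`, the first of these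
whose index lies in `{0, …, n}`. -/
def arcLength (A B n : ℕ) (a b : ℝ) (c : ℕ) : ℝ :=
  if B ≤ c then b else if c + A ≤ n then a else a + b

section ArcLength

variable {A B n c : ℕ} {a b : ℝ}

lemma arcLength_pos (ha : 0 < a) (hb : 0 < b) : 0 < arcLength A B n a b c := by
  unfold arcLength
  split_ifs <;> positivity

lemma arcLength_mem : arcLength A B n a b c ∈ ({a + b, a, b} : Set ℝ) := by
  unfold arcLength
  split_ifs <;> simp

lemma arcLength_eq_add_iff (ha : a ≠ 0) (hb : b ≠ 0) :
    arcLength A B n a b c = a + b ↔ n < c + A ∧ c < B := by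
  unfold arcLength
  split_ifs <;> simp [ha, hb] <;> omega

lemma arcLength_eq_left_iff (hn : n < A + B) (hb : b ≠ 0) (hab : a ≠ b) :
    arcLength A B n a b c = a ↔ c + A ≤ n := by
  unfold arcLength
  split_ifs <;> simp [hb, hab.symm] <;> omega

lemma arcLength_eq_right_iff (ha : a ≠ 0) (hab : a ≠ b) :
    arcLength A B n a b c = b ↔ B ≤ c := by
  unfold arcLength
  split_ifs <;> simp [ha, hab] <;> omega

end ArcLength

namespace ApproxPair

variable {α a b : ℝ} {A B n c : ℕ} {P Q : ℤ}

lemma mul_add_mul (h : ApproxPair α A B P Q a b) : A * b + B * a = 1 := by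
  have det : (B : ℝ) * P - A * Q = 1 := by exact_mod_cast h.det
  linear_combination B * h.mul_A - A * h.mul_B + det

lemma fract_mul (h : ApproxPair α A B P Q a b) {u v : ℕ} (hu : u ≤ A) (hv : v ≤ B)
    (huv : u < A ∨ v < B) : Int.fract ((u * B - v * A) * α) = u * b + v * a := by
  have ha := h.a_pos
  have hb := h.b_pos
  have lt_one : u * b + v * a < A * b + B * a := by
    rcases huv with hu' | hv'
    · exact add_lt_add_of_lt_of_le (by gcongr) (by gcongr)
    · exact add_lt_add_of_le_of_lt (by gcongr) (by gcongr)
  rw [Int.fract_eq_iff]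
  refine ⟨by positivity, lt_one.trans_eq h.mul_add_mul, u * Q - v * P, ?_⟩
  push_cast
  linear_combination u * h.mul_B - v * h.mul_A

lemma exists_coeffs (h : ApproxPair α A B P Q a b) {d : ℤ} (hd : |d| < A + B) :
    ∃ u v : ℕ, d = u * B - v * A ∧ Int.fract (d * α) = u * b + v * a := by
  have ha := h.a_pos
  have hb := h.b_pos
  obtain ⟨u, v, hd', he⟩ : ∃ u v : ℤ, d = u * B - v * A ∧ ⌊d * α⌋ = u * Q - v * P :=
    ⟨d * P - ⌊d * α⌋ * A, d * Q - ⌊d * α⌋ * B, by linear_combination -d * h.det,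
      by linear_combination -⌊d * α⌋ * h.det⟩
  have hf : Int.fract (d * α) = u * b + v * a := by
    rw [Int.fract, he, hd']
    push_cast
    linear_combination u * h.mul_B - v * h.mul_A
  have nonneg : 0 ≤ u * b + v * a := hf ▸ Int.fract_nonneg _
  rw [abs_lt] at hd
  have hu : 0 ≤ u := by
    by_contra! hu
    have hv : 0 < v := by
      by_contra! hv
      have : (u : ℝ) < 0 := by exact_mod_cast hu
      have : (v : ℝ) ≤ 0 := by exact_mod_cast hv
      nlinarith
    nlinarith
  have hv : 0 ≤ v := by
    by_contra! hv
    have hu : 0 < u := by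
      by_contra! hu
      have : (v : ℝ) < 0 := by exact_mod_cast hv
      have : (u : ℝ) ≤ 0 := by exact_mod_cast hu
      nlinarith
    nlinarith
  lift u to ℕ using hu
  lift v to ℕ using hv
  exact ⟨u, v, hd', mod_cast hf⟩

lemma arcLength_le_fract (h : ApproxPair α A B P Q a b) (hn : n < A + B) (hc : c ≤ n) {i : ℕ}
    (hi : i ≤ n) (hic : i ≠ c) : arcLength A B n a b c ≤ Int.fract ((c - i) * α) := by
  have ha := h.a_pos
  have hb := h.b_pos
  obtain ⟨u, v, hd, hf⟩ := h.exists_coeffs (d := c - i) (by rw [abs_lt]; omega)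
  push_cast at hf
  rw [hf, arcLength]
  rcases u with - | u <;> rcases v with - | v
  · omega
  · have : A ≤ (v + 1) * A := Nat.le_mul_of_pos_left A v.succ_pos
    push_cast at hd
    rw [if_neg (by grind), if_pos (by grind)]
    push_cast
    nlinarith
  · have : B ≤ (u + 1) * B := Nat.le_mul_of_pos_left B u.succ_pos
    push_cast at hd
    rw [if_pos (by grind)]
    push_cast
    nlinarith
  · have : a + b ≤ (u + 1 : ℕ) * b + (v + 1 : ℕ) * a := by
      push_cast
      nlinarith
    split_ifs <;> linarith

lemma exists_fract_eq_arcLength (h : ApproxPair α A B P Q a b)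
    (hn : n ∈ Set.Ico (max A B) (A + B)) (hc : c ≤ n) :
    ∃ i ≤ n, Int.fract ((c - i) * α) = arcLength A B n a b c := by
  obtain ⟨hmax, hlt⟩ := hn
  unfold arcLength
  split_ifs with hB hA
  · refine ⟨c - B, by omega, ?_⟩
    have := h.fract_mul (u := 1) (v := 0) (by omega) (by omega) (by omega)
    simpa [hB] using this
  · refine ⟨c + A, by omega, ?_⟩
    have := h.fract_mul (u := 0) (v := 1) (by omega) (by omega) (by omega)
    simpa using this
  · refine ⟨c + A - B, by omega, ?_⟩
    have := h.fract_mul (u := 1) (v := 1) (by omega) (by omega) (by omega)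
    push_cast [show B ≤ c + A by omega] at this ⊢
    rw [show (c : ℝ) - (c + A - B) = 1 * B - 1 * A by ring, this]
    ring

lemma wordAt_eq_arcWord_iff_lt_arcLength (h : ApproxPair α A B P Q a b) (hα : α ∈ Set.Ioo 0 1)
    (hn : n ∈ Set.Ico (max A B) (A + B)) (hc : c ≤ n) (m : ℤ) :
    wordAt (v0 α) m n = arcWord α n c ↔ Int.fract ((m + c) * α) < arcLength A B n a b c := by
  have hpos : 0 < arcLength A B n a b c := arcLength_pos h.a_pos h.b_pos
  have closer_iff (i : ℕ) (hi : 0 < Int.fract ((c - i) * α)) :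
      Int.fract ((m + c) * α) ≤ Int.fract ((m + i) * α) ↔
        Int.fract ((m + c) * α) < Int.fract ((c - i) * α) := by
    rw [← fract_le_fract_sub_iff _ hi, ← sub_mul, show (m + c - (c - i) : ℝ) = m + i by ring]
  rw [wordAt_eq_arcWord_iff hα hc]
  constructor
  · intro nearest
    obtain ⟨i, hi, e⟩ := h.exists_fract_eq_arcLength hn hc
    rw [← e] at hpos ⊢
    exact (closer_iff i hpos).1 (nearest i hi)
  · intro hlt i hi
    rcases eq_or_ne i c with rfl | hic
    · exact le_rfl
    · have hle := h.arcLength_le_fract hn.2 hc hi hic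
      exact (closer_iff i (hpos.trans_le hle)).2 (hlt.trans_le hle)

lemma injOn_arcWord (h : ApproxPair α A B P Q a b) (hα : α ∈ Set.Ioo 0 1)
    (hn : n ∈ Set.Ico (max A B) (A + B)) : Set.InjOn (arcWord α n) (Set.Iic n) := by
  intro i hi c hc e
  by_contra hic
  have hlt := (h.wordAt_eq_arcWord_iff_lt_arcLength hα hn hc (-i)).1 e
  have hle := h.arcLength_le_fract hn.2 hc hi hic
  push_cast at hlt
  rw [neg_add_eq_sub] at hlt
  exact hlt.not_ge hle

lemma hasFreq0_arcWord (h : ApproxPair α A B P Q a b) (hα : α ∈ Set.Ioo 0 1)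
    (hn : n ∈ Set.Ico (max A B) (A + B)) (hc : c ≤ n) :
    HasFreq0 α (arcWord α n c) (arcLength A B n a b c) := by
  obtain ⟨i, -, e⟩ := h.exists_fract_eq_arcLength hn hc
  have visits := tendsto_card_fract_lt_div α (c * α) (c - i)
  push_cast at visits
  rw [e] at visits
  simpa only [HasFreq0, length_arcWord, h.wordAt_eq_arcWord_iff_lt_arcLength hα hn hc, add_mul,
    Int.cast_natCast] using visits

lemma hasFreq0_arcWord_iff (h : ApproxPair α A B P Q a b) (hα : α ∈ Set.Ioo 0 1)
    (hn : n ∈ Set.Ico (max A B) (A + B)) (hc : c ≤ n) {L : ℝ} :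
    HasFreq0 α (arcWord α n c) L ↔ arcLength A B n a b c = L :=
  ⟨tendsto_nhds_unique (h.hasFreq0_arcWord hα hn hc), fun e => e ▸ h.hasFreq0_arcWord hα hn hc⟩

lemma length_eq_and_isFactor_iff (h : ApproxPair α A B P Q a b) (hα : α ∈ Set.Ioo 0 1)
    (hn : n ∈ Set.Ico (max A B) (A + B)) {w : List Bool} :
    w.length = n ∧ IsFactor α w ↔ ∃ c ≤ n, arcWord α n c = w := by
  constructor
  · rintro ⟨rfl, m, hm⟩
    obtain ⟨c, hc, e⟩ := exists_wordAt_eq_arcWord hα (m + 1) w.length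
    exact ⟨c, hc, by rw [← e, ← word_eq_wordAt, ← hm]⟩
  · rintro ⟨c, hc, rfl⟩
    obtain ⟨m, hm, e⟩ := (h.hasFreq0_arcWord hα hn hc).exists_wordAt_eq
      (arcLength_pos h.a_pos h.b_pos).ne'
    obtain ⟨m, rfl⟩ := Nat.exists_eq_add_of_le' hm
    exact ⟨length_arcWord α n c, m, by rw [word_eq_wordAt, ← Nat.cast_succ, e]⟩

lemma occursIn_arcWord_iff (h : ApproxPair α A B P Q a b) (hα : α ∈ Set.Ioo 0 1)
    (hn : n ∈ Set.Ico (max A B) (A + B)) (hc : c ≤ n) :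
    OccursIn α (arcWord α n c) (A + B - 2) ↔ n < c + A ∧ c < B := by
  have ha := h.a_pos
  have hb := h.b_pos
  have occurs_at_iff (m : ℕ) : arcWord α n c = word α m n ↔
      Int.fract ((m + 1 + c : ℕ) * α) < arcLength A B n a b c := by
    rw [eq_comm, word_eq_wordAt, h.wordAt_eq_arcWord_iff_lt_arcLength hα hn hc]
    push_cast
    rfl
  obtain ⟨hmax, hlt⟩ := hn
  simp only [OccursIn, length_arcWord, occurs_at_iff]
  constructor
  · rintro ⟨m, hm, H⟩
    obtain ⟨u, v, hd, hf⟩ := h.exists_coeffs (d := (m + 1 + c : ℕ)) (by rw [abs_lt]; omega)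
    have hu : u ≠ 0 := by
      rintro rfl
      push_cast at hd
      nlinarith
    have huB : B ≤ u * B := Nat.le_mul_of_pos_left B (Nat.pos_of_ne_zero hu)
    have hub : b ≤ u * b := le_mul_of_one_le_left hb.le (mod_cast Nat.pos_of_ne_zero hu)
    have hva : 0 ≤ v * a := by positivity
    rw [← Int.cast_natCast, hf, arcLength] at H
    split_ifs at H with hB hA
    · linarith
    · rcases Nat.eq_zero_or_pos v with rfl | hv
      · push_cast at hd
        grind
      · have : a ≤ v * a := le_mul_of_one_le_left ha.le (mod_cast hv)
        linarith
    · omega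
  · rintro ⟨hA, hB⟩
    refine ⟨B - c - 1, by omega, ?_⟩
    have fract_B := h.fract_mul (u := 1) (v := 0) (by omega) (by omega) (by omega)
    simp only [Nat.cast_one, Nat.cast_zero, one_mul, zero_mul, sub_zero, add_zero] at fract_B
    rw [show B - c - 1 + 1 + c = B by omega, fract_B,
      (arcLength_eq_add_iff ha.ne' hb.ne').2 ⟨hA, hB⟩]
    exact lt_add_of_pos_left b ha

lemma ncard_factors_eq_card (h : ApproxPair α A B P Q a b) (hα : α ∈ Set.Ioo 0 1)
    (hn : n ∈ Set.Ico (max A B) (A + B)) {p : List Bool → Prop} {s : Finset ℕ}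
    (hs : ∀ c, c ∈ s ↔ c ≤ n ∧ p (arcWord α n c)) :
    {w : List Bool | w.length = n ∧ IsFactor α w ∧ p w}.ncard = s.card := by
  have image_eq : {w : List Bool | w.length = n ∧ IsFactor α w ∧ p w} = arcWord α n '' s := by
    ext w
    simp only [Set.mem_ofPred_eq, ← and_assoc, h.length_eq_and_isFactor_iff hα hn, Set.mem_image,
      Finset.mem_coe, hs]
    grind
  have injOn : Set.InjOn (arcWord α n) s :=
    (h.injOn_arcWord hα hn).mono fun c hc => ((hs c).1 hc).1
  rw [image_eq, injOn.ncard_image, Set.ncard_coe_finset]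

end ApproxPair

/-- The factors of length `n` have frequencies `a + b`, `a` or `b`, with the number of factors of
each frequency determined by `A` and `B` as for two consecutive convergent denominators. Unlike
`ApproxPair` it is symmetric in the two convergents. -/
structure ThreeFrequencies (α : ℝ) (A B n : ℕ) (a b : ℝ) : Prop where
  exists_hasFreq0 : ∀ w : List Bool, w.length = n → IsFactor α w →
    ∃ L, HasFreq0 α w L ∧ (L = a + b ∨ L = a ∨ L = b)
  hasFreq0_add_iff : ∀ w : List Bool, w.length = n → IsFactor α w →
    (HasFreq0 α w (a + b) ↔ OccursIn α w (A + B - 2))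
  ncard_occursIn : {w : List Bool | w.length = n ∧ IsFactor α w ∧
    OccursIn α w (A + B - 2)}.ncard = A + B - 1 - n
  ncard_left : {w : List Bool | w.length = n ∧ IsFactor α w ∧ HasFreq0 α w a}.ncard = n + 1 - A
  ncard_right : {w : List Bool | w.length = n ∧ IsFactor α w ∧ HasFreq0 α w b}.ncard = n + 1 - B

lemma ThreeFrequencies.symm {α a b : ℝ} {A B n : ℕ} (h : ThreeFrequencies α A B n a b) :
    ThreeFrequencies α B A n b a where
  exists_hasFreq0 := by simpa only [add_comm, or_comm] using h.exists_hasFreq0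
  hasFreq0_add_iff := by simpa only [add_comm] using h.hasFreq0_add_iff
  ncard_occursIn := by simpa only [add_comm] using h.ncard_occursIn
  ncard_left := h.ncard_right
  ncard_right := h.ncard_left

theorem ApproxPair.threeFrequencies {α a b : ℝ} {A B n : ℕ} {P Q : ℤ}
    (h : ApproxPair α A B P Q a b) (hα : α ∈ Set.Ioo 0 1)
    (hn : n ∈ Set.Ico (max A B) (A + B)) (hab : a ≠ b) : ThreeFrequencies α A B n a b := by
  have ha := h.a_pos.ne'
  have hb := h.b_pos.ne'
  have ⟨hmax, hlt⟩ := hn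
  have hfactor {w} (hw : w.length = n) (hwf : IsFactor α w) :=
    (h.length_eq_and_isFactor_iff hα hn).1 ⟨hw, hwf⟩
  have hfreq {c L} (hc : c ≤ n) := h.hasFreq0_arcWord_iff hα hn hc (L := L)
  have hoccurs {c} (hc : c ≤ n) := h.occursIn_arcWord_iff hα hn hc
  constructor
  · intro w hw hwf
    obtain ⟨c, hc, rfl⟩ := hfactor hw hwf
    exact ⟨_, h.hasFreq0_arcWord hα hn hc, arcLength_mem⟩
  · intro w hw hwf
    obtain ⟨c, hc, rfl⟩ := hfactor hw hwf
    rw [hfreq hc, hoccurs hc, arcLength_eq_add_iff ha hb]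
  · rw [h.ncard_factors_eq_card hα hn (s := Finset.Ico (n + 1 - A) B), Nat.card_Ico]
    · omega
    · intro c
      rw [and_congr_right hoccurs, Finset.mem_Ico]
      omega
  · rw [h.ncard_factors_eq_card hα hn (s := Finset.range (n + 1 - A)), Finset.card_range]
    intro c
    rw [and_congr_right hfreq, arcLength_eq_left_iff hlt hb hab, Finset.mem_range]
    omega
  · rw [h.ncard_factors_eq_card hα hn (s := Finset.Icc B n), Nat.card_Icc]
    intro c
    rw [and_congr_right hfreq, arcLength_eq_right_iff ha hab, Finset.mem_Icc, and_comm]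

/-! ### Convergents -/

/-- The convergent numerators, indexed as `qd`: `convNum α (n+1)` is `p_n`, and
`convNum α 0 = p_{-1} = 1`. -/
def convNum (α : ℝ) : ℕ → ℤ
  | 0 => 1
  | 1 => 0
  | (n+2) => pq α n * convNum α (n+1) + convNum α n

/-- The approximation errors, indexed as `qd`: `convError α (n+1) = |q_n α - p_n|`, which is the
product of the first `n + 1` points of the Gauss orbit. -/
def convError (α : ℝ) (n : ℕ) : ℝ := ∏ i ∈ Finset.range n, gaussMap^[i] α

section Convergents

variable {α : ℝ}

lemma qd_add_two (α : ℝ) (i : ℕ) : qd α (i + 2) = pq α i * qd α (i + 1) + qd α i := rfl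

lemma convNum_add_two (α : ℝ) (i : ℕ) :
    convNum α (i + 2) = pq α i * convNum α (i + 1) + convNum α i := rfl

lemma convError_succ (α : ℝ) (i : ℕ) : convError α (i + 1) = convError α i * gaussMap^[i] α :=
  Finset.prod_range_succ _ _

lemma irrational_gaussMap_iterate (hirr : Irrational α) (i : ℕ) : Irrational (gaussMap^[i] α) := by
  induction i with
  | zero => exact hirr
  | succ i ih =>
    rw [Function.iterate_succ_apply']
    exact ih.inv.sub_intCast _

lemma gaussMap_iterate_mem_Ioo (hirr : Irrational α) (hα : α ∈ Set.Ioo 0 1) (i : ℕ) :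
    gaussMap^[i] α ∈ Set.Ioo 0 1 := by
  cases i with
  | zero => exact hα
  | succ i =>
    have hne := (irrational_gaussMap_iterate hirr (i + 1)).ne_zero
    rw [Function.iterate_succ_apply'] at hne ⊢
    exact ⟨(Int.fract_nonneg _).lt_of_ne' hne, Int.fract_lt_one _⟩

lemma inv_gaussMap_iterate (hirr : Irrational α) (hα : α ∈ Set.Ioo 0 1) (i : ℕ) :
    (gaussMap^[i] α)⁻¹ = pq α i + gaussMap^[i + 1] α := by
  have hpos : 0 < (gaussMap^[i] α)⁻¹ := inv_pos.2 (gaussMap_iterate_mem_Ioo hirr hα i).1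
  rw [Function.iterate_succ_apply', gaussMap, pq, natCast_floor_eq_intCast_floor hpos.le,
    Int.floor_add_fract]

lemma one_le_pq (hirr : Irrational α) (hα : α ∈ Set.Ioo 0 1) (i : ℕ) : 1 ≤ pq α i := by
  obtain ⟨hpos, hlt⟩ := gaussMap_iterate_mem_Ioo hirr hα i
  exact (Nat.one_le_floor_iff _).2 ((one_lt_inv₀ hpos).2 hlt).le

lemma qd_succ_le_qd_add_two (hirr : Irrational α) (hα : α ∈ Set.Ioo 0 1) (i : ℕ) :
    qd α (i + 1) ≤ qd α (i + 2) :=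
  le_add_right (Nat.le_mul_of_pos_left _ (one_le_pq hirr hα i))

lemma one_le_qd_succ (hirr : Irrational α) (hα : α ∈ Set.Ioo 0 1) (i : ℕ) : 1 ≤ qd α (i + 1) := by
  induction i with
  | zero => exact le_rfl
  | succ i ih => exact ih.trans (qd_succ_le_qd_add_two hirr hα i)

lemma convError_pos (hirr : Irrational α) (hα : α ∈ Set.Ioo 0 1) (i : ℕ) : 0 < convError α i :=
  Finset.prod_pos fun j _ => (gaussMap_iterate_mem_Ioo hirr hα j).1

lemma convError_succ_lt (hirr : Irrational α) (hα : α ∈ Set.Ioo 0 1) (i : ℕ) :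
    convError α (i + 1) < convError α i := by
  rw [convError_succ]
  exact mul_lt_of_lt_one_right (convError_pos hirr hα i) (gaussMap_iterate_mem_Ioo hirr hα i).2

lemma convError_eq_mul_succ (hirr : Irrational α) (hα : α ∈ Set.Ioo 0 1) (i : ℕ) :
    convError α i = (pq α i + gaussMap^[i + 1] α) * convError α (i + 1) := by
  have hne := (gaussMap_iterate_mem_Ioo hirr hα i).1.ne'
  rw [← inv_gaussMap_iterate hirr hα, convError_succ]
  field_simp

lemma qd_mul_sub_convNum (hirr : Irrational α) (hα : α ∈ Set.Ioo 0 1) :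
    ∀ i, qd α i * α - convNum α i = (-1) ^ (i + 1) * convError α i
  | 0 => by simp [qd, convNum, convError]
  | 1 => by simp [qd, convNum, convError]
  | i + 2 => by
    have recurrence := convError_eq_mul_succ hirr hα i
    rw [qd_add_two, convNum_add_two, convError_succ α (i + 1)]
    push_cast
    linear_combination qd_mul_sub_convNum hirr hα i +
      (pq α i : ℝ) * qd_mul_sub_convNum hirr hα (i + 1) + (-1) ^ (i + 1) * recurrence

lemma qd_mul_convNum_sub (α : ℝ) (i : ℕ) :
    (qd α (i + 1) : ℤ) * convNum α i - qd α i * convNum α (i + 1) = (-1) ^ i := by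
  induction i with
  | zero => simp [qd, convNum]
  | succ i ih =>
    rw [qd_add_two, convNum_add_two]
    push_cast
    linear_combination -ih

lemma convError_mul_qd_add (hirr : Irrational α) (hα : α ∈ Set.Ioo 0 1) (i : ℕ) :
    convError α i * (qd α (i + 1) + gaussMap^[i] α * qd α i) = 1 := by
  induction i with
  | zero => simp [qd, convError]
  | succ i ih =>
    have recurrence := convError_eq_mul_succ hirr hα i
    rw [convError_succ] at recurrence
    rw [qd_add_two, convError_succ]
    push_cast
    linear_combination ih - (qd α (i + 1) : ℝ) * recurrence

lemma approxPair_of_even (hirr : Irrational α) (hα : α ∈ Set.Ioo 0 1) {i : ℕ} (hi : Even i) :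
    ApproxPair α (qd α i) (qd α (i + 1)) (convNum α i) (convNum α (i + 1))
      (convError α i) (convError α (i + 1)) where
  a_pos := convError_pos hirr hα i
  b_pos := convError_pos hirr hα (i + 1)
  mul_A := by
    have := qd_mul_sub_convNum hirr hα i
    rw [hi.add_one.neg_one_pow] at this
    linarith
  mul_B := by
    have := qd_mul_sub_convNum hirr hα (i + 1)
    rw [hi.add_one.add_one.neg_one_pow] at this
    linarith
  det := by rw [qd_mul_convNum_sub, hi.neg_one_pow]

lemma approxPair_of_odd (hirr : Irrational α) (hα : α ∈ Set.Ioo 0 1) {i : ℕ} (hi : Odd i) :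
    ApproxPair α (qd α (i + 1)) (qd α i) (convNum α (i + 1)) (convNum α i)
      (convError α (i + 1)) (convError α i) where
  a_pos := convError_pos hirr hα (i + 1)
  b_pos := convError_pos hirr hα i
  mul_A := by
    have := qd_mul_sub_convNum hirr hα (i + 1)
    rw [hi.add_one.add_one.neg_one_pow] at this
    linarith
  mul_B := by
    have := qd_mul_sub_convNum hirr hα i
    rw [hi.add_one.neg_one_pow] at this
    linarith
  det := by
    have := qd_mul_convNum_sub α i
    rw [hi.neg_one_pow] at this
    linarith

theorem threeFrequencies_convergents (hirr : Irrational α) (hα : α ∈ Set.Ioo 0 1) {i n : ℕ}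
    (hn : n ∈ Set.Ico (max (qd α i) (qd α (i + 1))) (qd α i + qd α (i + 1))) :
    ThreeFrequencies α (qd α i) (qd α (i + 1)) n (convError α i) (convError α (i + 1)) := by
  have hne := (convError_succ_lt hirr hα i).ne
  rcases i.even_or_odd with hi | hi
  · exact (approxPair_of_even hirr hα hi).threeFrequencies hα hn hne.symm
  · rw [max_comm, add_comm (qd α i)] at hn
    exact ((approxPair_of_odd hirr hα hi).threeFrequencies hα hn hne).symm

end Convergents

section Weights

variable {α β D : ℝ} {k : ℕ}

lemma div_eq_convError_succ (hirr : Irrational α) (hα : α ∈ Set.Ioo 0 1)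
    (hβ : β = (1 + gaussMap^[k + 1] α)⁻¹) (hD : D = β * qd α (k + 2) + (1 - β) * qd α (k + 1)) :
    β / D = convError α (k + 1) := by
  have ht := (gaussMap_iterate_mem_Ioo hirr hα (k + 1)).1
  have normalized := convError_mul_qd_add hirr hα (k + 1)
  have hβ0 : β ≠ 0 := by
    rw [hβ]
    positivity
  have one_sub : 1 - β = β * gaussMap^[k + 1] α := by
    rw [hβ]
    field_simp
    ring
  have weight : β = convError α (k + 1) * D := by
    rw [hD, one_sub]
    linear_combination -β * normalized
  exact (div_eq_iff (right_ne_zero_of_mul (weight ▸ hβ0))).2 weight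

lemma mul_pq_add_div_eq_convError (hirr : Irrational α) (hα : α ∈ Set.Ioo 0 1)
    (hβ : β = (1 + gaussMap^[k + 1] α)⁻¹) (hD : D = β * qd α (k + 2) + (1 - β) * qd α (k + 1)) :
    (β * pq α k + (1 - β)) / D = convError α k := by
  have ht := (gaussMap_iterate_mem_Ioo hirr hα (k + 1)).1
  rw [convError_eq_mul_succ hirr hα, ← div_eq_convError_succ hirr hα hβ hD, ← mul_div_assoc]
  congr 1
  rw [hβ]
  field_simp
  ring

end Weights

/-- For `n = q_k + j` (`k ≥ 1`, `0 ≤ j ≤ q_{k-1} - 1`, `n ≥ 2`), with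
`β = β_k = 1/(1 + G^{k+1}(α))` and `D = β q_{k+1} + (1 - β) q_k`, every factor of `v₀` of
length `n` has a well-defined frequency; the frequency equals `(β(a_{k+1}+1)+(1-β))/D`
exactly for the `q_{k-1} - 1 - j` factors occurring in
`(v₀(1), …, v₀(q_k + q_{k-1} - 2))`, equals `(β a_{k+1} + (1-β))/D` for exactly
`q_k - q_{k-1} + 1 + j` factors, and equals `β/D` for exactly `j + 1` factors.
(Here `qd α (k+1) = q_k`, `pq α k = a_{k+1}`.) -/
theorem factor_frequency (α : ℝ) (hirr : Irrational α) (h0 : 0 < α) (h1 : α < 1)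
    (k j n : ℕ) (hk : 1 ≤ k) (hj : j ≤ qd α k - 1) (hn : n = qd α (k + 1) + j)
    (hn2 : 2 ≤ n)
    (β D : ℝ) (hβ : β = (1 + gaussMap^[k + 1] α)⁻¹)
    (hD : D = β * (qd α (k + 2) : ℝ) + (1 - β) * (qd α (k + 1) : ℝ)) :
    (∀ w : List Bool, w.length = n → IsFactor α w →
        ∃ L : ℝ, HasFreq0 α w L ∧
          (L = (β * (pq α k + 1) + (1 - β)) / D ∨
           L = (β * (pq α k) + (1 - β)) / D ∨ L = β / D)) ∧
    (∀ w : List Bool, w.length = n → IsFactor α w →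
        (HasFreq0 α w ((β * (pq α k + 1) + (1 - β)) / D) ↔
          OccursIn α w (qd α (k + 1) + qd α k - 2))) ∧
    {w : List Bool | w.length = n ∧ IsFactor α w ∧
        OccursIn α w (qd α (k + 1) + qd α k - 2)}.ncard = qd α k - 1 - j ∧
    {w : List Bool | w.length = n ∧ IsFactor α w ∧
        HasFreq0 α w ((β * (pq α k) + (1 - β)) / D)}.ncard
      = qd α (k + 1) - qd α k + 1 + j ∧
    {w : List Bool | w.length = n ∧ IsFactor α w ∧ HasFreq0 α w (β / D)}.ncard
      = j + 1 := by
  have hα : α ∈ Set.Ioo 0 1 := ⟨h0, h1⟩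
  have short := div_eq_convError_succ hirr hα hβ hD
  have middle := mul_pq_add_div_eq_convError hirr hα hβ hD
  have long : (β * (pq α k + 1) + (1 - β)) / D = convError α k + convError α (k + 1) := by
    rw [← short, ← middle]
    ring
  obtain ⟨hq, hle⟩ : 1 ≤ qd α k ∧ qd α k ≤ qd α (k + 1) := by
    obtain ⟨i, rfl⟩ := Nat.exists_eq_add_of_le' hk
    exact ⟨one_le_qd_succ hirr hα i, qd_succ_le_qd_add_two hirr hα i⟩
  have freq := threeFrequencies_convergents hirr hα (i := k) (n := n)
    ⟨max_le (by omega) (by omega), by omega⟩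
  rw [short, middle, long, add_comm (qd α (k + 1))]
  exact ⟨freq.exists_hasFreq0, freq.hasFreq0_add_iff, freq.ncard_occursIn.trans (by omega),
    freq.ncard_left.trans (by omega), freq.ncard_right.trans (by omega)⟩

end
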